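/- Let Ω ⊂ ℝ^N (N ≥ 3) be a bounded open set with C² boundary. Let α > 1/2, let Φ : Ω → (0,∞) be continuous with c₁⁻¹ δ(x)^α ≤ Φ(x) ≤ c₁ δ(x)^α for δ(x) < β₁, let Φ₀ satisfy c_*⁻¹ δ ≤ Φ₀ ≤ c_* δ, and let G : {(x,y) ∈ Ω × Ω : x ≠ y} → (0,∞) be Borel, symmetric, and satisfy for all β ∈ (0,β₁), x ∈ Σ_β: (i) Φ(x) G(x,y) ≤ c₀ |x−y|^{2−N} Φ(y) when 0 < |x−y| < aβ, and (ii) Φ(x) G(x,y) ≤ c₀ β^{2α} |x−y|^{2−N−2α} Φ(y) when |x−y| ≥ aβ (some a ≥ 2, c₀ ≥ 1), and (iii) for every r > 0 there is C(r) with G(x,y) ≤ C(r) Φ(x) whenever δ(y) ≥ r and δ(x) < r/2. Then for every positive Borel measure τ on Ω with ∫_Ω Φ dτ < ∞: ∫_{Σ_β} (Φ(x)/Φ₀(x)) (∫_Ω G(x,y) dτ(y)) dH^{N−1}(x) → 0 as β → 0⁺. -/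

import Mathlib

open MeasureTheory Metric Set Filter Topology

/-- `Ω` has `C²` boundary: near each boundary point, `Ω` coincides with the strict
sublevel set of a `C²` function with nonvanishing derivative. -/
def HasC2Boundary {N : ℕ} (Ω : Set (EuclideanSpace ℝ (Fin N))) : Prop :=
  ∀ p ∈ frontier Ω, ∃ (U : Set (EuclideanSpace ℝ (Fin N)))
    (f : EuclideanSpace ℝ (Fin N) → ℝ),
    IsOpen U ∧ p ∈ U ∧ ContDiffOn ℝ 2 f U ∧ (∀ x ∈ U, fderiv ℝ f x ≠ 0) ∧
    Ω ∩ U = {x ∈ U | f x < 0}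

/-!
Write `δ` for the distance to the boundary and `Σ_β = {δ = β}`. Estimates (i) and (ii) say that
`Φ x * G x y ≤ c₀ * K_β x y * Φ y` for `x ∈ Σ_β`, where `K_β` is the kernel `|x - y| ^ (2 - N)`,
cut down by the factor `(β / |x - y|) ^ (2α)` beyond the distance `a β`. If the surface measure of
`Σ_β` is upper Ahlfors regular of order `N - 1`, uniformly in `β`, then summation over dyadic
annuli gives `∫_{Σ_β} K_β x y dx ≲ β`, uniformly in `y`; the tail converges since `2α > 1`. As
`Φ / Φ₀ ≲ Φ / β` on `Σ_β`, the part of `τ` in `{δ < r}` contributes a multiple of `∫_{δ < r} Φ dτ`,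
which is small with `r`. For the part in `{δ ≥ r}`, estimate (iii) gives `Φ x * G x y ≲ β ^ (2α)`,
hence a contribution of order `β ^ (2α - 1) → 0`.

For the regularity of `Σ_β`, let `f` define `Ω` near a boundary point `p` and let `x, x' ∈ Σ_β` be
close to `p`. If `q` is a boundary point nearest to `x'`, then `x + (q - x')` is at distance `β`
from `x`, so it lies in the closure of `Ω`, while `f q ≥ 0`. Strict differentiability of `f` at `p`
turns this into `f' (x' - x) ≥ - c |x' - x|` with `c` small. By symmetry `|f' (x' - x)|` is at most
`c |x' - x|`, so `Σ_β` near `p` projects injectively, with Lipschitz inverse, to the hyperplane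
`ker f'`.
-/

open scoped ENNReal NNReal

section UpperAhlforsRegular

variable {X : Type*} [PseudoMetricSpace X] [MeasurableSpace X] {μ ν : Measure X} {n : ℝ}
  {C D : ℝ≥0}

/-- Upper Ahlfors regularity of order `n`: balls of radius `r` have mass at most `C r ^ n`. The
centres range over the whole space, not only over the support of `μ`. -/
def IsUpperAhlforsRegular (μ : Measure X) (n : ℝ) (C : ℝ≥0) : Prop :=
  ∀ y, ∀ r > 0, μ (ball y r) ≤ C * ENNReal.ofReal r ^ n

namespace IsUpperAhlforsRegular

lemma mono (hμ : IsUpperAhlforsRegular μ n C) (hνμ : ν ≤ μ) : IsUpperAhlforsRegular ν n C :=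
  fun y r hr => (hνμ _).trans (hμ y r hr)

lemma add (hμ : IsUpperAhlforsRegular μ n C) (hν : IsUpperAhlforsRegular ν n D) :
    IsUpperAhlforsRegular (μ + ν) n (C + D) := fun y r hr => by
  rw [Measure.add_apply, ENNReal.coe_add, add_mul]
  exact add_le_add (hμ y r hr) (hν y r hr)

lemma measure_singleton (hμ : IsUpperAhlforsRegular μ n C) (hn : 0 < n) (y : X) : μ {y} = 0 := by
  have hlim : Tendsto (fun r : ℝ => C * ENNReal.ofReal r ^ n) (𝓝[>] 0) (𝓝 0) := by
    have hr : Tendsto (fun r : ℝ => ENNReal.ofReal r ^ n) (𝓝 0) (𝓝 0) := by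
      simpa [hn] using (ENNReal.tendsto_ofReal tendsto_id).ennrpow_const n (a := .ofReal 0)
    simpa using ENNReal.Tendsto.const_mul (hr.mono_left nhdsWithin_le_nhds)
      (Or.inr ENNReal.coe_ne_top)
  refine nonpos_iff_eq_zero.1 (ge_of_tendsto hlim ?_)
  filter_upwards [self_mem_nhdsWithin] with r hr
  exact (measure_mono (singleton_subset_iff.2 (mem_ball_self hr))).trans (hμ y r hr)

lemma exists_forall_measure_le (n : ℝ) (C : ℝ≥0) {s : Set X} (hs : Bornology.IsBounded s) :
    ∃ M : ℝ≥0, ∀ μ : Measure X, IsUpperAhlforsRegular μ n C → μ s ≤ M := by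
  rcases s.eq_empty_or_nonempty with rfl | ⟨x, -⟩
  · exact ⟨0, by simp⟩
  obtain ⟨R, hR, hsR⟩ := hs.subset_ball_lt 0 x
  refine ⟨C * (R ^ n).toNNReal, fun μ hμ => ?_⟩
  calc μ s ≤ μ (ball x R) := measure_mono hsR
    _ ≤ C * ENNReal.ofReal R ^ n := hμ x R hR
    _ = _ := by rw [ENNReal.ofReal_rpow_of_pos hR, ENNReal.coe_mul, ENNReal.ofReal]

end IsUpperAhlforsRegular

end UpperAhlforsRegular

section Codimension

open Module

lemma hausdorffMeasure_le_of_antilipschitzWith_domRestrict {X Y : Type*} [EMetricSpace X]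
    [EMetricSpace Y] [MeasurableSpace X] [BorelSpace X] [MeasurableSpace Y] [BorelSpace Y]
    {f : X → Y} {s : Set X} {K : ℝ≥0} {d : ℝ} (hd : 0 ≤ d)
    (hf : AntilipschitzWith K (s.domRestrict f)) : μH[d] s ≤ K ^ d * μH[d] (f '' s) := by
  have hs : μH[d] s = μH[d] (univ : Set s) := by
    simpa using (isometry_subtype_coe (s := s)).hausdorffMeasure_image (Or.inl hd) univ
  simpa [hs, range_domRestrict] using hf.le_hausdorffMeasure_image hd univ

variable {E F : Type*} [NormedAddCommGroup E] [NormedSpace ℝ E] [NormedAddCommGroup F]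
  [NormedSpace ℝ F]

lemma exists_isUpperAhlforsRegular_of_antilipschitzWith_domRestrict [FiniteDimensional ℝ E]
    [MeasurableSpace F] [BorelSpace F] (P : F →L[ℝ] E) (K : ℝ≥0) :
    ∃ C : ℝ≥0, ∀ S : Set F, AntilipschitzWith K (S.domRestrict P) →
      IsUpperAhlforsRegular (μH[finrank ℝ E].restrict S) (finrank ℝ E) C := by
  borelize E
  set n := finrank ℝ E
  set R := ‖P‖ + 1
  have hR : 0 < R := by positivity
  have hball : μH[n] (ball (0 : E) 1) ≠ ∞ := measure_ball_lt_top.ne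
  obtain ⟨C, hC⟩ : ∃ C : ℝ≥0, C =
      (K : ℝ≥0∞) ^ (n : ℝ) * (ENNReal.ofReal R ^ n * μH[n] (ball (0 : E) 1)) :=
    ⟨_, ENNReal.coe_toNNReal (by finiteness)⟩
  refine ⟨C, fun S hS y r hr => ?_⟩
  rw [hC, Measure.restrict_apply measurableSet_ball]
  have himage : P '' (ball y r ∩ S) ⊆ ball (P y) (R * r) := by
    rintro _ ⟨x, ⟨hx, -⟩, rfl⟩
    rw [mem_ball_iff_norm] at hx ⊢
    calc ‖P x - P y‖ ≤ ‖P‖ * ‖x - y‖ := by rw [← map_sub]; exact P.le_opNorm _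
      _ ≤ ‖P‖ * r := by gcongr
      _ < R * r := by gcongr; exact lt_add_one _
  have hanti : AntilipschitzWith K ((ball y r ∩ S).domRestrict P) := fun x x' =>
    hS ⟨x, x.2.2⟩ ⟨x', x'.2.2⟩
  calc μH[n] (ball y r ∩ S)
      ≤ K ^ (n : ℝ) * μH[n] (P '' (ball y r ∩ S)) :=
        hausdorffMeasure_le_of_antilipschitzWith_domRestrict n.cast_nonneg hanti
    _ ≤ K ^ (n : ℝ) * μH[n] (ball (P y) (R * r)) := by gcongr
    _ = _ := by
      rw [Measure.addHaar_ball_of_pos _ _ (by positivity), ENNReal.ofReal_pow (by positivity),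
        ENNReal.ofReal_mul hR.le, mul_pow, ENNReal.rpow_natCast, ENNReal.rpow_natCast]
      ring

/-- The map is the projection onto `ker L` along a vector `w` with `L w = 1`. -/
lemma exists_antilipschitzWith_domRestrict_ker {L : F →L[ℝ] ℝ} (hL : L ≠ 0) :
    ∃ P : F →L[ℝ] L.ker, ∃ c > 0, ∀ S : Set F,
      (∀ x ∈ S, ∀ x' ∈ S, |L (x' - x)| ≤ c * ‖x' - x‖) → AntilipschitzWith 2 (S.domRestrict P) := by
  obtain ⟨u, hu⟩ : ∃ u, L u ≠ 0 := by
    by_contra! h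
    exact hL (ContinuousLinearMap.ext h)
  set w := (L u)⁻¹ • u
  have hw : L w = 1 := by simp [w, hu]
  have hwpos : 0 < ‖w‖ := norm_pos_iff.2 (by rintro h; simp [h] at hw)
  set P := L.projKerOfRightInverse (ContinuousLinearMap.toSpanSingleton ℝ w) (fun t => by simp [hw])
  refine ⟨P, 1 / (2 * ‖w‖), by positivity, fun S hS => .of_le_mul_dist fun x x' => ?_⟩
  have hP : ‖P x - P x'‖ = ‖(x - x' : F) - L (x - x') • w‖ := by
    rw [← map_sub, ← Submodule.norm_coe]
    simp only [P, ContinuousLinearMap.coe_projKerOfRightInverse_apply,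
      ContinuousLinearMap.toSpanSingleton_apply]
  have hsplit : ‖(x - x' : F)‖ - |L (x - x')| * ‖w‖ ≤ ‖P x - P x'‖ := by
    rw [hP, ← Real.norm_eq_abs, ← norm_smul]
    exact norm_sub_norm_le _ _
  have hchord : |L (x - x')| * ‖w‖ ≤ ‖(x - x' : F)‖ / 2 :=
    calc |L (x - x')| * ‖w‖ ≤ 1 / (2 * ‖w‖) * ‖(x - x' : F)‖ * ‖w‖ := by
          gcongr; exact hS x' x'.2 x x.2
      _ = ‖(x - x' : F)‖ / 2 := by field_simp
  rw [Subtype.dist_eq, dist_eq_norm, dist_eq_norm]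
  simp only [domRestrict_apply, NNReal.coe_ofNat]
  linarith

lemma exists_isUpperAhlforsRegular_of_abs_le [FiniteDimensional ℝ F] [MeasurableSpace F]
    [BorelSpace F] {L : F →L[ℝ] ℝ} (hL : L ≠ 0) :
    ∃ c > 0, ∃ C : ℝ≥0, ∀ S : Set F,
      (∀ x ∈ S, ∀ x' ∈ S, |L (x' - x)| ≤ c * ‖x' - x‖) →
      IsUpperAhlforsRegular (μH[(finrank ℝ F : ℝ) - 1].restrict S) (finrank ℝ F - 1) C := by
  have hdim : (finrank ℝ L.ker : ℝ) = finrank ℝ F - 1 := by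
    rw [← Module.Dual.finrank_ker_add_one_of_ne_zero (f := (L : F →ₗ[ℝ] ℝ))
      (fun h => hL (ContinuousLinearMap.coe_injective h))]
    simp
  obtain ⟨P, c, hc, hP⟩ := exists_antilipschitzWith_domRestrict_ker hL
  obtain ⟨C, hC⟩ := exists_isUpperAhlforsRegular_of_antilipschitzWith_domRestrict P 2
  rw [hdim] at hC
  exact ⟨c, hc, C, fun S hS => hC S (hP S hS)⟩

end Codimension

section ParallelSurfaces

/-- The inner parallel surface `Σ_β` of `Ω`, at distance `β` from its boundary. -/
def parallelSurface {X : Type*} [PseudoMetricSpace X] (Ω : Set X) (β : ℝ) : Set X :=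
  {x ∈ Ω | infDist x (frontier Ω) = β}

section PseudoMetricSpace

variable {X : Type*} [PseudoMetricSpace X] {Ω : Set X} {β : ℝ}

lemma measurableSet_parallelSurface [MeasurableSpace X] [OpensMeasurableSpace X]
    (hΩ : IsOpen Ω) (β : ℝ) : MeasurableSet (parallelSurface Ω β) :=
  hΩ.measurableSet.inter
    (isClosed_eq (continuous_infDist_pt _) continuous_const).measurableSet

lemma frontier_nonempty_of_mem_parallelSurface {x : X} (hβ : 0 < β)
    (hx : x ∈ parallelSurface Ω β) : (frontier Ω).Nonempty := by
  by_contra! hempty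
  have hxβ := hx.2
  rw [hempty, infDist_empty] at hxβ
  exact hβ.ne hxβ

lemma parallelSurface_subset_thickening {ε : ℝ} (hβ : β ∈ Ioo 0 ε) :
    parallelSurface Ω β ⊆ thickening ε (frontier Ω) := fun _ hx =>
  (mem_thickening_iff_infDist_lt (frontier_nonempty_of_mem_parallelSurface hβ.1 hx)).2
    (hx.2.trans_lt hβ.2)

end PseudoMetricSpace

lemma subset_of_isPreconnected_of_disjoint_frontier {X : Type*} [TopologicalSpace X]
    {s t : Set X} (ht : IsPreconnected t) (hts : Disjoint t (frontier s))
    (hne : (t ∩ s).Nonempty) : t ⊆ s := by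
  have hcover : t ⊆ interior s ∪ interior sᶜ := by
    rw [← compl_frontier_eq_union_interior]
    exact hts.subset_compl_right
  have hdisj : Disjoint (interior s) (interior sᶜ) :=
    disjoint_compl_right.mono interior_subset interior_subset
  obtain ⟨x, hxt, hxs⟩ := hne
  have hx : x ∈ interior s :=
    (hcover hxt).resolve_right fun hx => interior_subset hx hxs
  exact (ht.subset_left_of_subset_union isOpen_interior isOpen_interior hdisj hcover
    ⟨x, hxt, hx⟩).trans interior_subset

variable {F : Type*} [NormedAddCommGroup F] [NormedSpace ℝ F] {Ω : Set F}

lemma ball_infDist_frontier_subset {x : F} (hx : x ∈ Ω) :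
    ball x (infDist x (frontier Ω)) ⊆ Ω := fun _ hy =>
  subset_of_isPreconnected_of_disjoint_frontier (convex_ball _ _).isPreconnected
    disjoint_ball_infDist ⟨x, mem_ball_self (dist_nonneg.trans_lt hy), hx⟩ hy

/-- A weakening of `C¹` boundary: near each boundary point `p`, `Ω` is the strict sublevel set of
a function that is strictly differentiable at `p`, with nonzero derivative there. -/
def HasStrictDiffBoundary (Ω : Set F) : Prop :=
  ∀ p ∈ frontier Ω, ∃ U ∈ 𝓝 p, ∃ (f : F → ℝ) (L : F →L[ℝ] ℝ),
    HasStrictFDerivAt f L p ∧ L ≠ 0 ∧ Ω ∩ U = {x ∈ U | f x < 0}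

lemma HasC2Boundary.hasStrictDiffBoundary {N : ℕ} {Ω : Set (EuclideanSpace ℝ (Fin N))}
    (hΩ : HasC2Boundary Ω) : HasStrictDiffBoundary Ω := fun p hp => by
  obtain ⟨U, f, hUo, hpU, hf, hf', hΩU⟩ := hΩ p hp
  have hU := hUo.mem_nhds hpU
  exact ⟨U, hU, f, _, (hf.contDiffAt hU).hasStrictFDerivAt (by norm_num), hf' p hpU, hΩU⟩

lemma exists_forall_neg_le_of_hasStrictFDerivAt {U : Set F} {f : F → ℝ} {L : F →L[ℝ] ℝ} {p : F}
    {c : ℝ} (hf : HasStrictFDerivAt f L p) (hU : U ∈ 𝓝 p) (hΩU : Ω ∩ U = {x ∈ U | f x < 0})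
    (hc : 0 < c) :
    ∃ R > 0, ∀ z ∈ ball p R ∩ Ω, ∀ q ∈ ball p R \ Ω, -(c * ‖q - z‖) ≤ L (q - z) := by
  have hstrict := hf.isLittleO.def hc
  rw [nhds_prod_eq] at hstrict
  obtain ⟨V, hV, hfV⟩ := eventually_prod_self_iff'.1 hstrict
  obtain ⟨R, hR, hRUV⟩ := Metric.mem_nhds_iff.1 (inter_mem hU hV)
  refine ⟨R, hR, fun z hz q hq => ?_⟩
  have hfz : f z < 0 := by
    have hzU : z ∈ Ω ∩ U := ⟨hz.2, (hRUV hz.1).1⟩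
    rw [hΩU] at hzU
    exact hzU.2
  have hfq : 0 ≤ f q := by
    by_contra! hfq
    have hqΩ : q ∈ {x ∈ U | f x < 0} := ⟨(hRUV hq.1).1, hfq⟩
    rw [← hΩU] at hqΩ
    exact hq.2 hqΩ.1
  have hqz : |f q - f z - L (q - z)| ≤ c * ‖q - z‖ := hfV q (hRUV hq.1).2 z (hRUV hz.1).2
  linarith [(abs_le.1 hqz).2]

lemma neg_le_of_mem_parallelSurface [ProperSpace F] {L : F →L[ℝ] ℝ} {p x x' : F} {R β c : ℝ}
    (hΩ : IsOpen Ω)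
    (hcone : ∀ z ∈ ball p R ∩ Ω, ∀ q ∈ ball p R \ Ω, -(c * ‖q - z‖) ≤ L (q - z))
    (hβ : β ∈ Ioo 0 (R / 2)) (hx : x ∈ parallelSurface Ω β ∩ ball p (R / 2))
    (hx' : x' ∈ parallelSurface Ω β ∩ ball p (R / 2)) : -(c * ‖x' - x‖) ≤ L (x' - x) := by
  obtain ⟨q, hq, hx'q⟩ := isClosed_frontier.exists_infDist_eq_dist
    (frontier_nonempty_of_mem_parallelSurface hβ.1 hx'.1) x'
  rw [hx'.1.2] at hx'q
  have hqR : q ∈ ball p R \ Ω := by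
    refine ⟨?_, (hΩ.frontier_eq ▸ hq).2⟩
    calc dist q p ≤ dist x' q + dist x' p := dist_triangle_left _ _ _
      _ < R := by linarith [hβ.2, mem_ball.1 hx'.2]
  have hball : ball x β ⊆ {z | -(c * ‖q - z‖) ≤ L (q - z)} := by
    intro z hz
    refine hcone z ⟨?_, ball_infDist_frontier_subset hx.1.1 (hx.1.2.symm ▸ hz)⟩ q hqR
    calc dist z p ≤ dist z x + dist x p := dist_triangle _ _ _
      _ < R := by linarith [hβ.2, mem_ball.1 hx.2, mem_ball.1 hz]
  have hclosed : IsClosed {z | -(c * ‖q - z‖) ≤ L (q - z)} :=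
    isClosed_le (by fun_prop) (by fun_prop)
  have hmem : x + (q - x') ∈ closure (ball x β) := by
    rw [closure_ball x hβ.1.ne', mem_closedBall, dist_self_add_left, ← dist_eq_norm, dist_comm,
      hx'q]
  have hchord : q - (x + (q - x')) = x' - x := by abel
  simpa only [mem_ofPred_eq, hchord] using closure_minimal hball hclosed hmem

lemma exists_forall_abs_le_of_mem_parallelSurface [ProperSpace F] {U : Set F} {f : F → ℝ}
    {L : F →L[ℝ] ℝ} {p : F} {c : ℝ} (hΩ : IsOpen Ω) (hf : HasStrictFDerivAt f L p)
    (hU : U ∈ 𝓝 p) (hΩU : Ω ∩ U = {x ∈ U | f x < 0}) (hc : 0 < c) :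
    ∃ R > 0, ∀ β ∈ Ioo 0 R, ∀ x ∈ parallelSurface Ω β ∩ ball p R,
      ∀ x' ∈ parallelSurface Ω β ∩ ball p R, |L (x' - x)| ≤ c * ‖x' - x‖ := by
  obtain ⟨R, hR, hcone⟩ := exists_forall_neg_le_of_hasStrictFDerivAt hf hU hΩU hc
  refine ⟨R / 2, half_pos hR, fun β hβ x hx x' hx' => abs_le.2 ⟨?_, ?_⟩⟩
  · exact neg_le_of_mem_parallelSurface hΩ hcone hβ hx hx'
  · have hswap := neg_le_of_mem_parallelSurface hΩ hcone hβ hx' hx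
    rw [← neg_sub x' x, norm_neg, map_neg] at hswap
    exact neg_le_neg_iff.1 hswap

namespace HasStrictDiffBoundary

open Module

variable [FiniteDimensional ℝ F] [MeasurableSpace F] [BorelSpace F]

lemma exists_nhds_isUpperAhlforsRegular (hΩd : HasStrictDiffBoundary Ω) (hΩ : IsOpen Ω) {p : F}
    (hp : p ∈ frontier Ω) :
    ∃ V ∈ 𝓝 p, ∃ C : ℝ≥0, ∀ᶠ β in 𝓝[>] 0,
      IsUpperAhlforsRegular (μH[(finrank ℝ F : ℝ) - 1].restrict (parallelSurface Ω β ∩ V))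
        (finrank ℝ F - 1) C := by
  have : ProperSpace F := FiniteDimensional.proper ℝ F
  obtain ⟨U, hU, f, L, hf, hL, hΩU⟩ := hΩd p hp
  obtain ⟨c, hc, C, hC⟩ := exists_isUpperAhlforsRegular_of_abs_le hL
  obtain ⟨R, hR, hchord⟩ := exists_forall_abs_le_of_mem_parallelSurface hΩ hf hU hΩU hc
  refine ⟨ball p R, ball_mem_nhds p hR, C, ?_⟩
  filter_upwards [Ioo_mem_nhdsGT hR] with β hβ
  exact hC _ (hchord β hβ)

theorem exists_isUpperAhlforsRegular (hΩd : HasStrictDiffBoundary Ω) (hΩ : IsOpen Ω)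
    (hΩb : Bornology.IsBounded Ω) :
    ∃ C : ℝ≥0, ∀ᶠ β in 𝓝[>] 0,
      IsUpperAhlforsRegular (μH[(finrank ℝ F : ℝ) - 1].restrict (parallelSurface Ω β))
        (finrank ℝ F - 1) C := by
  have : ProperSpace F := FiniteDimensional.proper ℝ F
  have hcompact : IsCompact (frontier Ω) :=
    isCompact_of_isClosed_isBounded isClosed_frontier (hΩb.closure.subset frontier_subset_closure)
  obtain ⟨V, hV, C, hC⟩ : ∃ V ∈ 𝓝ˢ (frontier Ω), ∃ C : ℝ≥0, ∀ᶠ β in 𝓝[>] 0,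
      IsUpperAhlforsRegular (μH[(finrank ℝ F : ℝ) - 1].restrict (parallelSurface Ω β ∩ V))
        (finrank ℝ F - 1) C := by
    refine hcompact.induction_on ?_ ?_ ?_ ?_
    · exact ⟨∅, by simp, 0, .of_forall fun β y r _ => by simp⟩
    · exact fun s t hst ⟨V, hV, hC⟩ => ⟨V, nhdsSet_mono hst hV, hC⟩
    · rintro s t ⟨V, hV, C, hC⟩ ⟨W, hW, D, hD⟩
      refine ⟨V ∪ W, union_mem_nhdsSet hV hW, C + D, ?_⟩
      filter_upwards [hC, hD] with β hCβ hDβ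
      rw [inter_union_distrib_left]
      exact (hCβ.add hDβ).mono (Measure.restrict_union_le _ _)
    · intro p hp
      obtain ⟨V, hV, C, hC⟩ := hΩd.exists_nhds_isUpperAhlforsRegular hΩ hp
      exact ⟨interior V, mem_nhdsWithin_of_mem_nhds (interior_mem_nhds.2 hV), V,
        mem_nhdsSet_iff_forall.2 fun q hq => mem_interior_iff_mem_nhds.1 hq, C, hC⟩
  obtain ⟨ε, hε, hεV⟩ := (hasBasis_nhdsSet_thickening hcompact).mem_iff.1 hV
  refine ⟨C, ?_⟩
  filter_upwards [hC, Ioo_mem_nhdsGT hε] with β hCβ hβ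
  rwa [inter_eq_left.2 ((parallelSurface_subset_thickening hβ).trans hεV)] at hCβ

end HasStrictDiffBoundary

end ParallelSurfaces

section RieszPotentials

lemma ball_diff_singleton_subset_iUnion_annulus {X : Type*} [MetricSpace X] (y : X)
    {R : ℝ} (hR : 0 < R) : ball y R \ {y} ⊆
      ⋃ k : ℕ, closedBall y (2 * (R / 2 * (1 / 2) ^ k)) \ ball y (R / 2 * (1 / 2) ^ k) := by
  rintro x ⟨hx, hxy⟩
  have hd : 0 < dist x y / R := div_pos (dist_pos.2 hxy) hR
  obtain ⟨k, hlow, hup⟩ := exists_nat_pow_near_of_lt_one hd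
    ((div_le_one hR).2 (mem_ball.1 hx).le) one_half_pos one_half_lt_one
  rw [lt_div_iff₀ hR, pow_succ] at hlow
  rw [div_le_iff₀ hR] at hup
  refine mem_iUnion.2 ⟨k, mem_closedBall.2 (by linarith), ?_⟩
  rw [mem_ball, not_lt]
  linarith

lemma compl_ball_subset_iUnion_annulus {X : Type*} [PseudoMetricSpace X] (y : X) {R : ℝ}
    (hR : 0 < R) : (ball y R)ᶜ ⊆ ⋃ k : ℕ, closedBall y (2 * (R * 2 ^ k)) \ ball y (R * 2 ^ k) := by
  intro x hx
  rw [mem_compl_iff, mem_ball, not_lt] at hx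
  obtain ⟨k, hlow, hup⟩ := exists_nat_pow_near ((one_le_div hR).2 hx) one_lt_two
  rw [le_div_iff₀ hR] at hlow
  rw [div_lt_iff₀ hR, pow_succ] at hup
  refine mem_iUnion.2 ⟨k, mem_closedBall.2 (by linarith), ?_⟩
  rw [mem_ball, not_lt]
  linarith

variable {X : Type*} [MetricSpace X] [MeasurableSpace X] [OpensMeasurableSpace X]

namespace IsUpperAhlforsRegular

variable {μ : Measure X} {C : ℝ≥0} {n s R : ℝ} {y : X}

lemma setLIntegral_annulus_edist_rpow_neg_le (hμ : IsUpperAhlforsRegular μ n C) (hs : 0 ≤ s)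
    (hR : 0 < R) :
    ∫⁻ x in closedBall y (2 * R) \ ball y R, edist x y ^ (-s) ∂μ ≤
      C * 3 ^ n * ENNReal.ofReal (R ^ (n - s)) := by
  set A := closedBall y (2 * R) \ ball y R
  have hA : A ⊆ ball y (3 * R) :=
    sdiff_subset.trans (closedBall_subset_ball (by linarith))
  have hkernel : ∀ x ∈ A, edist x y ^ (-s) ≤ ENNReal.ofReal R ^ (-s) := fun x hx => by
    rw [ENNReal.rpow_neg, ENNReal.rpow_neg, ENNReal.inv_le_inv, edist_dist]
    gcongr
    simpa using hx.2
  calc ∫⁻ x in A, edist x y ^ (-s) ∂μ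
      ≤ ∫⁻ _ in A, ENNReal.ofReal R ^ (-s) ∂μ :=
        setLIntegral_mono' (measurableSet_closedBall.diff measurableSet_ball) hkernel
    _ ≤ ENNReal.ofReal R ^ (-s) * (C * ENNReal.ofReal (3 * R) ^ n) := by
        rw [setLIntegral_const]
        gcongr
        exact (measure_mono hA).trans (hμ y _ (by positivity))
    _ = C * 3 ^ n * ENNReal.ofReal (R ^ (n - s)) := by
        rw [ENNReal.ofReal_mul (by norm_num), ENNReal.mul_rpow_of_ne_top (by simp) (by simp),
          ENNReal.ofReal_rpow_of_pos hR, ENNReal.ofReal_rpow_of_pos hR, sub_eq_add_neg,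
          Real.rpow_add hR, ENNReal.ofReal_mul (by positivity), ENNReal.ofReal_ofNat]
        ring

lemma exists_setLIntegral_edist_rpow_neg_le_of_subset_iUnion_annulus (hs : 0 ≤ s) {b : ℝ}
    (hb : 0 < b) (hbns : b ^ (n - s) < 1) (C : ℝ≥0) :
    ∃ K : ℝ≥0, ∀ μ : Measure X, IsUpperAhlforsRegular μ n C → ∀ y, ∀ R > 0, ∀ S : Set X,
      S ⊆ ⋃ k : ℕ, closedBall y (2 * (R * b ^ k)) \ ball y (R * b ^ k) →
      ∫⁻ x in S, edist x y ^ (-s) ∂μ ≤ K * ENNReal.ofReal (R ^ (n - s)) := by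
  obtain ⟨K, hK⟩ : ∃ K : ℝ≥0,
      K = (C : ℝ≥0∞) * 3 ^ n * (1 - ENNReal.ofReal (b ^ (n - s)))⁻¹ := by
    have hinv : (1 - ENNReal.ofReal (b ^ (n - s)))⁻¹ ≠ ∞ :=
      ENNReal.inv_ne_top.2 (tsub_pos_of_lt (ENNReal.ofReal_lt_one.2 hbns)).ne'
    exact ⟨_, ENNReal.coe_toNNReal (by finiteness)⟩
  refine ⟨K, fun μ hμ y R hR S hS => ?_⟩
  have hscale (k : ℕ) : ENNReal.ofReal ((R * b ^ k) ^ (n - s)) =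
      ENNReal.ofReal (R ^ (n - s)) * ENNReal.ofReal (b ^ (n - s)) ^ k := by
    rw [Real.mul_rpow hR.le (by positivity), ENNReal.ofReal_mul (by positivity),
      ← ENNReal.ofReal_pow (by positivity), Real.rpow_pow_comm hb.le]
  calc ∫⁻ x in S, edist x y ^ (-s) ∂μ
      ≤ ∑' k : ℕ, ∫⁻ x in closedBall y (2 * (R * b ^ k)) \ ball y (R * b ^ k),
          edist x y ^ (-s) ∂μ :=
        (lintegral_mono_set hS).trans (lintegral_iUnion_le _ _)
    _ ≤ ∑' k : ℕ, C * 3 ^ n * ENNReal.ofReal ((R * b ^ k) ^ (n - s)) :=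
        ENNReal.tsum_le_tsum fun k => hμ.setLIntegral_annulus_edist_rpow_neg_le hs (by positivity)
    _ = K * ENNReal.ofReal (R ^ (n - s)) := by
        simp_rw [hscale]
        rw [ENNReal.tsum_mul_left, ENNReal.tsum_mul_left, ENNReal.tsum_geometric, hK]
        ring

theorem exists_setLIntegral_ball_edist_rpow_neg_le (hs : 0 ≤ s) (hsn : s < n) (C : ℝ≥0) :
    ∃ K : ℝ≥0, ∀ μ : Measure X, IsUpperAhlforsRegular μ n C → ∀ y, ∀ R > 0,
      ∫⁻ x in ball y R, edist x y ^ (-s) ∂μ ≤ K * ENNReal.ofReal (R ^ (n - s)) := by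
  obtain ⟨K, hK⟩ := exists_setLIntegral_edist_rpow_neg_le_of_subset_iUnion_annulus (X := X) hs
    one_half_pos (Real.rpow_lt_one one_half_pos.le one_half_lt_one (sub_pos.2 hsn)) C
  refine ⟨K, fun μ hμ y R hR => ?_⟩
  have hsingleton : μ {y} = 0 := hμ.measure_singleton (hs.trans_lt hsn) y
  calc ∫⁻ x in ball y R, edist x y ^ (-s) ∂μ
      = ∫⁻ x in ball y R \ {y}, edist x y ^ (-s) ∂μ :=
        setLIntegral_congr (sdiff_null_ae_eq_self hsingleton).symm
    _ ≤ K * ENNReal.ofReal ((R / 2) ^ (n - s)) :=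
        hK μ hμ y (R / 2) (half_pos hR) _ (ball_diff_singleton_subset_iUnion_annulus y hR)
    _ ≤ K * ENNReal.ofReal (R ^ (n - s)) := by
        have : 0 ≤ n - s := (sub_pos.2 hsn).le
        gcongr
        exact half_le_self hR.le

theorem exists_setLIntegral_compl_ball_edist_rpow_neg_le (hs : 0 ≤ s) (hns : n < s) (C : ℝ≥0) :
    ∃ K : ℝ≥0, ∀ μ : Measure X, IsUpperAhlforsRegular μ n C → ∀ y, ∀ R > 0,
      ∫⁻ x in (ball y R)ᶜ, edist x y ^ (-s) ∂μ ≤ K * ENNReal.ofReal (R ^ (n - s)) := by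
  obtain ⟨K, hK⟩ := exists_setLIntegral_edist_rpow_neg_le_of_subset_iUnion_annulus (X := X) hs
    two_pos (Real.rpow_lt_one_of_one_lt_of_neg one_lt_two (sub_neg.2 hns)) C
  exact ⟨K, fun μ hμ y R hR => hK μ hμ y R hR _ (compl_ball_subset_iUnion_annulus y hR)⟩

end IsUpperAhlforsRegular

end RieszPotentials

section BoundaryKernel

/-- The majorant of the Green kernel in dimension `d`, seen from the parallel surface at distance
`β` from the boundary: `|x - y| ^ (2 - d)` for `|x - y| < R` and
`β ^ (2α) |x - y| ^ (2 - d - 2α)` otherwise. It is infinite on the diagonal, also when `d = 2`,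
because the Green estimates say nothing there. -/
noncomputable def boundaryKernel {X : Type*} [PseudoMetricSpace X] (d α R β : ℝ) (x y : X) :
    ℝ≥0∞ :=
  open Classical in
  if x = y then ∞ else if dist x y < R then edist x y ^ (2 - d)
    else ENNReal.ofReal (β ^ (2 * α)) * edist x y ^ (2 - d - 2 * α)

variable {X : Type*} [MetricSpace X] {d α R β : ℝ}

lemma ofReal_le_boundaryKernel {c g φ : ℝ} {x y : X} (hc : 0 < c) (hφ : 0 < φ) (hβ : 0 ≤ β)
    (hnear : 0 < dist x y → dist x y < R → g ≤ c * dist x y ^ (2 - d) * φ)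
    (hfar : R ≤ dist x y → g ≤ c * β ^ (2 * α) * dist x y ^ (2 - d - 2 * α) * φ) :
    ENNReal.ofReal g ≤
      ENNReal.ofReal c * boundaryKernel d α R β x y * ENNReal.ofReal φ := by
  rcases eq_or_ne x y with rfl | hxy
  · rw [boundaryKernel, if_pos rfl, ENNReal.mul_top (ENNReal.ofReal_pos.2 hc).ne',
      ENNReal.top_mul (ENNReal.ofReal_pos.2 hφ).ne']
    exact le_top
  have hdist := dist_pos.2 hxy
  rw [boundaryKernel, if_neg hxy, edist_dist, ENNReal.ofReal_rpow_of_pos hdist,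
    ENNReal.ofReal_rpow_of_pos hdist]
  split_ifs with hR
  · rw [← ENNReal.ofReal_mul hc.le, ← ENNReal.ofReal_mul (by positivity)]
    exact ENNReal.ofReal_le_ofReal (hnear hdist hR)
  · rw [← ENNReal.ofReal_mul (by positivity), ← ENNReal.ofReal_mul hc.le,
      ← ENNReal.ofReal_mul (by positivity), ← mul_assoc]
    exact ENNReal.ofReal_le_ofReal (hfar (not_lt.1 hR))

variable [MeasurableSpace X] [OpensMeasurableSpace X]

lemma measurable_boundaryKernel [SecondCountableTopology X] (d α R β : ℝ) :
    Measurable (Function.uncurry (boundaryKernel (X := X) d α R β)) := by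
  have hdist : Measurable fun p : X × X => dist p.1 p.2 := measurable_fst.dist measurable_snd
  have hedist : Measurable fun p : X × X => edist p.1 p.2 := measurable_fst.edist measurable_snd
  exact .ite measurableSet_diagonal measurable_const
    (.ite (measurableSet_lt hdist measurable_const) (hedist.pow_const _)
      ((hedist.pow_const _).const_mul _))

lemma exists_setLIntegral_ball_boundaryKernel_le (hd : 2 ≤ d) (α : ℝ) (C : ℝ≥0) :
    ∃ K : ℝ≥0, ∀ μ : Measure X, IsUpperAhlforsRegular μ (d - 1) C → ∀ β, ∀ R > 0, ∀ y,
      ∫⁻ x in ball y R, boundaryKernel d α R β x y ∂μ ≤ K * ENNReal.ofReal R := by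
  obtain ⟨K, hK⟩ := IsUpperAhlforsRegular.exists_setLIntegral_ball_edist_rpow_neg_le (X := X)
    (sub_nonneg.2 hd) (show d - 2 < d - 1 by linarith) C
  refine ⟨K, fun μ hμ β R hR y => ?_⟩
  have hne : ∀ᵐ x ∂μ, x ≠ y := by
    simpa [ae_iff] using hμ.measure_singleton (by linarith) y
  calc ∫⁻ x in ball y R, boundaryKernel d α R β x y ∂μ
      = ∫⁻ x in ball y R, edist x y ^ (-(d - 2)) ∂μ := by
        refine setLIntegral_congr_fun_ae measurableSet_ball ?_
        filter_upwards [hne] with x hxy hx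
        rw [boundaryKernel, if_neg hxy, if_pos (mem_ball.1 hx), neg_sub]
    _ ≤ K * ENNReal.ofReal (R ^ (d - 1 - (d - 2))) := hK μ hμ y R hR
    _ = K * ENNReal.ofReal R := by
        rw [show d - 1 - (d - 2) = 1 by ring, Real.rpow_one]

lemma exists_setLIntegral_compl_ball_boundaryKernel_le (hd : 2 ≤ d) (hα : 1 / 2 < α) (C : ℝ≥0) :
    ∃ K : ℝ≥0, ∀ μ : Measure X, IsUpperAhlforsRegular μ (d - 1) C → ∀ β, ∀ R > 0, ∀ y,
      ∫⁻ x in (ball y R)ᶜ, boundaryKernel d α R β x y ∂μ ≤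
        K * ENNReal.ofReal (β ^ (2 * α)) * ENNReal.ofReal (R ^ (1 - 2 * α)) := by
  obtain ⟨K, hK⟩ :=
    IsUpperAhlforsRegular.exists_setLIntegral_compl_ball_edist_rpow_neg_le (X := X)
      (show 0 ≤ d - 2 + 2 * α by linarith) (show d - 1 < d - 2 + 2 * α by linarith) C
  refine ⟨K, fun μ hμ β R hR y => ?_⟩
  calc ∫⁻ x in (ball y R)ᶜ, boundaryKernel d α R β x y ∂μ
      = ∫⁻ x in (ball y R)ᶜ,
          ENNReal.ofReal (β ^ (2 * α)) * edist x y ^ (-(d - 2 + 2 * α)) ∂μ := by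
        refine setLIntegral_congr_fun measurableSet_ball.compl fun x hx => ?_
        have hxR : ¬ dist x y < R := hx
        have hxy : x ≠ y := fun h => hxR (by rwa [h, dist_self])
        simp only [boundaryKernel, if_neg hxy, if_neg hxR]
        ring_nf
    _ = ENNReal.ofReal (β ^ (2 * α)) * ∫⁻ x in (ball y R)ᶜ, edist x y ^ (-(d - 2 + 2 * α)) ∂μ :=
        lintegral_const_mul' _ _ ENNReal.ofReal_ne_top
    _ ≤ ENNReal.ofReal (β ^ (2 * α)) *
          (K * ENNReal.ofReal (R ^ (d - 1 - (d - 2 + 2 * α)))) := by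
        gcongr
        exact hK μ hμ y R hR
    _ = K * ENNReal.ofReal (β ^ (2 * α)) * ENNReal.ofReal (R ^ (1 - 2 * α)) := by
        rw [show d - 1 - (d - 2 + 2 * α) = 1 - 2 * α by ring]
        ring

theorem exists_lintegral_boundaryKernel_le {a : ℝ} (hd : 2 ≤ d) (hα : 1 / 2 < α) (ha : 0 < a)
    (C : ℝ≥0) :
    ∃ D : ℝ≥0, ∀ μ : Measure X, IsUpperAhlforsRegular μ (d - 1) C → ∀ β > 0, ∀ y,
      ∫⁻ x, boundaryKernel d α (a * β) β x y ∂μ ≤ D * ENNReal.ofReal β := by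
  obtain ⟨K₁, hnear⟩ := exists_setLIntegral_ball_boundaryKernel_le (X := X) hd α C
  obtain ⟨K₂, hfar⟩ := exists_setLIntegral_compl_ball_boundaryKernel_le (X := X) hd hα C
  refine ⟨K₁ * a.toNNReal + K₂ * (a ^ (1 - 2 * α)).toNNReal, fun μ hμ β hβ y => ?_⟩
  have haβ : 0 < a * β := mul_pos ha hβ
  have hscale : β ^ (2 * α) * (a * β) ^ (1 - 2 * α) = a ^ (1 - 2 * α) * β := by
    rw [Real.mul_rpow ha.le hβ.le, mul_left_comm, ← Real.rpow_add hβ, add_sub_cancel,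
      Real.rpow_one]
  calc ∫⁻ x, boundaryKernel d α (a * β) β x y ∂μ
      = ∫⁻ x in ball y (a * β), boundaryKernel d α (a * β) β x y ∂μ +
          ∫⁻ x in (ball y (a * β))ᶜ, boundaryKernel d α (a * β) β x y ∂μ :=
        (lintegral_add_compl _ measurableSet_ball).symm
    _ ≤ K₁ * ENNReal.ofReal (a * β) +
          K₂ * ENNReal.ofReal (β ^ (2 * α)) * ENNReal.ofReal ((a * β) ^ (1 - 2 * α)) :=
        add_le_add (hnear μ hμ β _ haβ y) (hfar μ hμ β _ haβ y)
    _ = K₁ * (ENNReal.ofReal a * ENNReal.ofReal β) +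
          K₂ * (ENNReal.ofReal (a ^ (1 - 2 * α)) * ENNReal.ofReal β) := by
        rw [mul_assoc (K₂ : ℝ≥0∞), ← ENNReal.ofReal_mul (by positivity), hscale,
          ENNReal.ofReal_mul ha.le, ENNReal.ofReal_mul (by positivity)]
    _ = _ := by
        push_cast [ENNReal.ofReal]
        ring

end BoundaryKernel

section PotentialEstimates

lemma exists_pos_forall_le_of_le_infDist_frontier {X : Type*} [PseudoMetricSpace X]
    [ProperSpace X] {Ω : Set X} (hΩ : IsOpen Ω) (hΩb : Bornology.IsBounded Ω) {f : X → ℝ}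
    (hf : ContinuousOn f Ω) (hfpos : ∀ x ∈ Ω, 0 < f x) {r : ℝ} (hr : 0 < r) :
    ∃ m > 0, ∀ x ∈ Ω, r ≤ infDist x (frontier Ω) → m ≤ f x := by
  set S := closure Ω ∩ {x | r ≤ infDist x (frontier Ω)}
  have hS : IsCompact S :=
    (isCompact_of_isClosed_isBounded isClosed_closure hΩb.closure).inter_right
      (isClosed_le continuous_const (continuous_infDist_pt _))
  have hSΩ : S ⊆ Ω := by
    rintro x ⟨hxc, hxr⟩
    by_contra hxΩ
    have hx : x ∈ frontier Ω := hΩ.frontier_eq ▸ ⟨hxc, hxΩ⟩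
    exact hr.not_ge (hxr.trans_eq (infDist_zero_of_mem hx))
  obtain ⟨m, hm, hmf⟩ := hS.exists_forall_le' (hf.mono hSΩ) fun x hx => hfpos x (hSΩ hx)
  exact ⟨m, hm, fun x hx hxr => hmf x ⟨subset_closure hx, hxr⟩⟩

lemma lintegral_lintegral_indicator_add_const_le {X Y : Type*} [MeasurableSpace X]
    [MeasurableSpace Y] {μ : Measure X} {ν : Measure Y} [SFinite μ] [SFinite ν]
    {K : X → Y → ℝ≥0∞} (hK : Measurable (Function.uncurry K)) {L : Set Y} (hL : MeasurableSet L)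
    {κ e : ℝ≥0∞} (hκ : ∀ y, ∫⁻ x, K x y ∂μ ≤ κ) :
    ∫⁻ x, ∫⁻ y, (L.indicator (K x) y + e) ∂ν ∂μ ≤ κ * ν L + e * μ univ * ν univ := by
  have hind : Measurable (Function.uncurry fun x y => L.indicator (K x) y + e) :=
    (hK.indicator (measurable_snd hL)).add_const e
  rw [lintegral_lintegral_swap hind.aemeasurable]
  calc ∫⁻ y, ∫⁻ x, (L.indicator (K x) y + e) ∂μ ∂ν
      ≤ ∫⁻ y, (L.indicator (fun _ => κ) y + e * μ univ) ∂ν := by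
        refine lintegral_mono fun y => ?_
        rw [lintegral_add_right _ measurable_const, lintegral_const]
        gcongr
        by_cases hy : y ∈ L
        · simpa [hy] using hκ y
        · simp [hy]
    _ = κ * ν L + e * μ univ * ν univ := by
        rw [lintegral_add_right _ measurable_const, lintegral_indicator_const hL,
          lintegral_const]

lemma setLIntegral_mul_setLIntegral_le {X Y : Type*} [MeasurableSpace X] [MeasurableSpace Y]
    {σ : Measure X} {τ : Measure Y} {S : Set X} {Ω : Set Y} (hS : MeasurableSet S)
    (hΩ : MeasurableSet Ω) {w u : X → ℝ} {v : Y → ℝ} {G : X → Y → ℝ} {H : X → Y → ℝ≥0∞} {k : ℝ}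
    (hk : 0 ≤ k) (hu : ∀ x ∈ S, 0 ≤ u x) (hw : ∀ x ∈ S, w x ≤ k * u x)
    (hv : AEMeasurable v (τ.restrict Ω))
    (hG : ∀ x ∈ S, ∀ y ∈ Ω, ENNReal.ofReal (u x * G x y) ≤ H x y * ENNReal.ofReal (v y)) :
    ∫⁻ x in S, ENNReal.ofReal (w x) * ∫⁻ y in Ω, ENNReal.ofReal (G x y) ∂τ ∂σ ≤
      ENNReal.ofReal k *
        ∫⁻ x in S, ∫⁻ y, H x y ∂(τ.restrict Ω).withDensity (fun y => ENNReal.ofReal (v y)) ∂σ := by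
  rw [← lintegral_const_mul' _ _ ENNReal.ofReal_ne_top]
  refine setLIntegral_mono' hS fun x hx => ?_
  calc ENNReal.ofReal (w x) * ∫⁻ y in Ω, ENNReal.ofReal (G x y) ∂τ
      ≤ ENNReal.ofReal k * (ENNReal.ofReal (u x) * ∫⁻ y in Ω, ENNReal.ofReal (G x y) ∂τ) := by
        rw [← mul_assoc, ← ENNReal.ofReal_mul hk]
        gcongr
        exact hw x hx
    _ = ENNReal.ofReal k * ∫⁻ y in Ω, ENNReal.ofReal (u x * G x y) ∂τ := by
        rw [← lintegral_const_mul' _ _ ENNReal.ofReal_ne_top]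
        simp_rw [ENNReal.ofReal_mul (hu x hx)]
    _ ≤ ENNReal.ofReal k * ∫⁻ y in Ω, ENNReal.ofReal (v y) * H x y ∂τ := by
        gcongr 1
        exact setLIntegral_mono' hΩ fun y hy => (hG x hx y hy).trans_eq (mul_comm _ _)
    _ = _ := by
        rw [lintegral_withDensity_eq_lintegral_mul_non_measurable₀ _ hv.ennreal_ofReal
          (.of_forall fun _ => ENNReal.ofReal_lt_top)]
        rfl

lemma setLIntegral_mul_setLIntegral_le_of_notMem {X Y : Type*} [MeasurableSpace X]
    [MeasurableSpace Y] {σ : Measure X} {τ : Measure Y} {S : Set X} {Ω L : Set Y}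
    (hS : MeasurableSet S) (hΩ : MeasurableSet Ω) (hL : MeasurableSet L) {w u : X → ℝ} {v : Y → ℝ}
    {G : X → Y → ℝ} {k : ℝ} (hk : 0 ≤ k) (hu : ∀ x ∈ S, 0 ≤ u x) (hw : ∀ x ∈ S, w x ≤ k * u x)
    (hv : AEMeasurable v (τ.restrict Ω)) (hτ : ∫⁻ y in Ω, ENNReal.ofReal (v y) ∂τ ≠ ∞)
    (hσ : σ S ≠ ∞) {K : X → Y → ℝ≥0∞} {κ e : ℝ≥0∞} (hKm : Measurable (Function.uncurry K))
    (hKσ : ∀ y, ∫⁻ x in S, K x y ∂σ ≤ κ)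
    (hK : ∀ x ∈ S, ∀ y ∈ Ω, ENNReal.ofReal (u x * G x y) ≤ K x y * ENNReal.ofReal (v y))
    (he : ∀ x ∈ S, ∀ y ∈ Ω, y ∉ L → ENNReal.ofReal (u x * G x y) ≤ e * ENNReal.ofReal (v y)) :
    ∫⁻ x in S, ENNReal.ofReal (w x) * ∫⁻ y in Ω, ENNReal.ofReal (G x y) ∂τ ∂σ ≤
      ENNReal.ofReal k *
        (κ * (τ.restrict Ω).withDensity (fun y => ENNReal.ofReal (v y)) L +
          e * σ S * ∫⁻ y in Ω, ENNReal.ofReal (v y) ∂τ) := by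
  have : IsFiniteMeasure (σ.restrict S) := isFiniteMeasure_restrict.2 hσ
  set ν := (τ.restrict Ω).withDensity fun y => ENNReal.ofReal (v y) with hν
  have : IsFiniteMeasure ν := isFiniteMeasure_withDensity hτ
  have hνuniv : ν univ = ∫⁻ y in Ω, ENNReal.ofReal (v y) ∂τ := by
    rw [hν, withDensity_apply _ MeasurableSet.univ, Measure.restrict_univ]
  have hmaj : ∀ x ∈ S, ∀ y ∈ Ω, ENNReal.ofReal (u x * G x y) ≤
      (L.indicator (K x) y + e) * ENNReal.ofReal (v y) := by
    intro x hx y hy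
    by_cases hyL : y ∈ L
    · rw [indicator_of_mem hyL]
      exact (hK x hx y hy).trans (by gcongr; exact le_self_add)
    · simpa only [indicator_of_notMem hyL, zero_add] using he x hx y hy hyL
  refine (setLIntegral_mul_setLIntegral_le hS hΩ hk hu hw hv hmaj).trans ?_
  gcongr
  simpa only [hνuniv, Measure.restrict_apply_univ] using
    lintegral_lintegral_indicator_add_const_le (ν := ν) (e := e) hKm hL hKσ

lemma ofReal_div_mul_add_eq {c β p : ℝ} (hβ : 0 < β) (A s t : ℝ≥0∞) :
    ENNReal.ofReal (c / β) * (A * ENNReal.ofReal β * s + ENNReal.ofReal (β ^ p) * t) =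
      ENNReal.ofReal c * A * s + ENNReal.ofReal c * t * ENNReal.ofReal (β ^ (p - 1)) := by
  have hcβ : ENNReal.ofReal (c / β) * ENNReal.ofReal β = ENNReal.ofReal c := by
    rw [← ENNReal.ofReal_mul' hβ.le, div_mul_cancel₀ _ hβ.ne']
  have hβp : ENNReal.ofReal (β ^ p) = ENNReal.ofReal β * ENNReal.ofReal (β ^ (p - 1)) := by
    rw [← ENNReal.ofReal_mul hβ.le, Real.rpow_sub_one hβ.ne', mul_div_cancel₀ _ hβ.ne']
  rw [hβp, ← hcβ]
  ring

lemma tendsto_zero_of_forall_exists_le {ι κ : Type*} {l : Filter ι} {l' : Filter κ} [l'.NeBot]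
    {f w : ι → ℝ≥0∞} {v : κ → ℝ≥0∞} {A : ℝ≥0} (hv : Tendsto v l' (𝓝 0))
    (hw : Tendsto w l (𝓝 0))
    (hf : ∀ᶠ r in l', ∃ B : ℝ≥0, ∀ᶠ i in l, f i ≤ A * v r + B * w i) :
    Tendsto f l (𝓝 0) := by
  have hAv : Tendsto (fun r => A * v r) l' (𝓝 0) := by
    simpa using ENNReal.Tendsto.const_mul hv (Or.inr ENNReal.coe_ne_top)
  refine ENNReal.tendsto_nhds_zero.2 fun ε hε => ?_
  have hε2 : 0 < ε / 2 := ENNReal.half_pos hε.ne'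
  obtain ⟨r, ⟨B, hB⟩, hr⟩ :=
    (hf.and (ENNReal.tendsto_nhds_zero.1 hAv _ hε2)).exists
  have hBw : Tendsto (fun i => B * w i) l (𝓝 0) := by
    simpa using ENNReal.Tendsto.const_mul hw (Or.inr ENNReal.coe_ne_top)
  filter_upwards [hB, ENNReal.tendsto_nhds_zero.1 hBw _ hε2] with i hi hwi
  calc f i ≤ A * v r + B * w i := hi
    _ ≤ ε / 2 + ε / 2 := add_le_add hr hwi
    _ = ε := ENNReal.add_halves ε

end PotentialEstimates

section GreenPotential

variable {X : Type*} [PseudoMetricSpace X] {Ω : Set X} {Φ : X → ℝ} {G : X → X → ℝ} {α : ℝ}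

lemma exists_eventually_ofReal_mul_le_of_notMem_thickening [ProperSpace X] (hΩ : IsOpen Ω)
    (hΩb : Bornology.IsBounded Ω) (hΦc : ContinuousOn Φ Ω) (hΦpos : ∀ x ∈ Ω, 0 < Φ x)
    {c₁ β₁ : ℝ} (hβ₁ : 0 < β₁)
    (hΦ : ∀ x ∈ Ω, infDist x (frontier Ω) < β₁ → Φ x ≤ c₁ * infDist x (frontier Ω) ^ α)
    {r Cr : ℝ} (hr : 0 < r) (hCr : 0 < Cr)
    (hG : ∀ x ∈ Ω, ∀ y ∈ Ω, r ≤ infDist y (frontier Ω) → infDist x (frontier Ω) < r / 2 →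
      G x y ≤ Cr * Φ x) :
    ∃ E : ℝ≥0, ∀ᶠ β in 𝓝[>] 0, ∀ x ∈ parallelSurface Ω β, ∀ y ∈ Ω,
      y ∉ thickening r (frontier Ω) →
      ENNReal.ofReal (Φ x * G x y) ≤ E * ENNReal.ofReal (β ^ (2 * α)) * ENNReal.ofReal (Φ y) := by
  obtain ⟨m, hm, hmΦ⟩ := exists_pos_forall_le_of_le_infDist_frontier hΩ hΩb hΦc hΦpos hr
  set E := Cr * c₁ ^ 2 / m
  refine ⟨E.toNNReal, ?_⟩
  filter_upwards [Ioo_mem_nhdsGT hβ₁, Ioo_mem_nhdsGT (half_pos hr)] with β hβ hβr x hx y hy hyr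
  have hyr' : r ≤ infDist y (frontier Ω) := by
    rwa [mem_thickening_iff_infDist_lt (frontier_nonempty_of_mem_parallelSurface hβ.1 hx),
      not_lt] at hyr
  have hGxy : G x y ≤ Cr * Φ x := hG x hx.1 y hy hyr' (hx.2.trans_lt hβr.2)
  have hΦx : Φ x ≤ c₁ * β ^ α := hx.2 ▸ hΦ x hx.1 (hx.2.trans_lt hβ.2)
  have hΦx₀ : 0 < Φ x := hΦpos x hx.1
  have hβ₀ : 0 < β := hβ.1
  have hreal : Φ x * G x y ≤ E * β ^ (2 * α) * Φ y :=
    calc Φ x * G x y ≤ Φ x * (Cr * Φ x) := by gcongr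
      _ = Cr * Φ x ^ 2 := by ring
      _ ≤ Cr * (c₁ * β ^ α) ^ 2 := by gcongr
      _ = E * β ^ (2 * α) * m := by
        rw [mul_pow, ← Real.rpow_mul_natCast hβ.1.le, Nat.cast_ofNat, mul_comm α 2]
        simp only [E]
        field_simp
      _ ≤ E * β ^ (2 * α) * Φ y := by gcongr; exact hmΦ y hy hyr'
  refine (ENNReal.ofReal_le_ofReal hreal).trans_eq ?_
  rw [ENNReal.ofReal_mul (by positivity), ENNReal.ofReal_mul (by positivity), ENNReal.ofReal]

variable [MeasurableSpace X] [OpensMeasurableSpace X]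

lemma tendsto_withDensity_thickening_frontier {τ : Measure X} (hΩ : IsOpen Ω) {f : X → ℝ≥0∞}
    (hf : ∫⁻ x in Ω, f x ∂τ ≠ ∞) :
    Tendsto (fun r => (τ.restrict Ω).withDensity f (thickening r (frontier Ω))) (𝓝[>] 0)
      (𝓝 0) := by
  have := isFiniteMeasure_withDensity hf
  have hnull : (τ.restrict Ω).withDensity f (frontier Ω) = 0 := by
    refine withDensity_absolutelyContinuous _ _ ?_
    rw [Measure.restrict_apply isClosed_frontier.measurableSet,
      (disjoint_frontier_iff_isOpen.2 hΩ).inter_eq, measure_empty]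
  exact hnull ▸ tendsto_measure_thickening_of_isClosed
    ⟨1, one_pos, measure_ne_top _ _⟩ isClosed_frontier

theorem tendsto_setLIntegral_parallelSurface_mul [SecondCountableTopology X] {σ τ : Measure X}
    (hΩ : IsOpen Ω) (hΦc : ContinuousOn Φ Ω) (hΦpos : ∀ x ∈ Ω, 0 < Φ x)
    (hτ : ∫⁻ x in Ω, ENNReal.ofReal (Φ x) ∂τ ≠ ∞) (hα : 1 / 2 < α) {w : X → ℝ} {c : ℝ}
    (hc : 0 ≤ c) {K : ℝ → X → X → ℝ≥0∞} {A M : ℝ≥0}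
    (hKm : ∀ β, Measurable (Function.uncurry (K β)))
    (hσ : ∀ᶠ β in 𝓝[>] 0, σ (parallelSurface Ω β) ≤ M)
    (hw : ∀ᶠ β in 𝓝[>] 0, ∀ x ∈ parallelSurface Ω β, w x ≤ c / β * Φ x)
    (hKσ : ∀ᶠ β in 𝓝[>] 0, ∀ y, ∫⁻ x in parallelSurface Ω β, K β x y ∂σ ≤ A * ENNReal.ofReal β)
    (hK : ∀ᶠ β in 𝓝[>] 0, ∀ x ∈ parallelSurface Ω β, ∀ y ∈ Ω,
      ENNReal.ofReal (Φ x * G x y) ≤ K β x y * ENNReal.ofReal (Φ y))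
    (hfar : ∀ r > 0, ∃ E : ℝ≥0, ∀ᶠ β in 𝓝[>] 0, ∀ x ∈ parallelSurface Ω β, ∀ y ∈ Ω,
      y ∉ thickening r (frontier Ω) →
      ENNReal.ofReal (Φ x * G x y) ≤
        E * ENNReal.ofReal (β ^ (2 * α)) * ENNReal.ofReal (Φ y)) :
    Tendsto (fun β => ∫⁻ x in parallelSurface Ω β,
      ENNReal.ofReal (w x) * ∫⁻ y in Ω, ENNReal.ofReal (G x y) ∂τ ∂σ) (𝓝[>] 0) (𝓝 0) := by
  have hpow : Tendsto (fun β : ℝ => ENNReal.ofReal (β ^ (2 * α - 1))) (𝓝[>] 0) (𝓝 0) := by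
    have hα' : 0 < 2 * α - 1 := by linarith
    have h := ENNReal.tendsto_ofReal (Real.continuousAt_rpow_const 0 _ (Or.inr hα'.le)).tendsto
    rw [Real.zero_rpow hα'.ne', ENNReal.ofReal_zero] at h
    exact h.mono_left nhdsWithin_le_nhds
  set ν := (τ.restrict Ω).withDensity fun y => ENNReal.ofReal (Φ y)
  refine tendsto_zero_of_forall_exists_le (A := c.toNNReal * A)
    (tendsto_withDensity_thickening_frontier hΩ hτ) hpow ?_
  filter_upwards [self_mem_nhdsWithin] with r hr
  obtain ⟨E, hE⟩ := hfar r hr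
  obtain ⟨T, hT⟩ : ∃ T : ℝ≥0, T = ∫⁻ x in Ω, ENNReal.ofReal (Φ x) ∂τ :=
    ⟨_, ENNReal.coe_toNNReal hτ⟩
  refine ⟨c.toNNReal * (E * M * T), ?_⟩
  filter_upwards [hσ, hw, hKσ, hK, hE, self_mem_nhdsWithin] with β hσβ hwβ hKσβ hKβ hEβ hβ
  calc ∫⁻ x in parallelSurface Ω β, ENNReal.ofReal (w x) *
        ∫⁻ y in Ω, ENNReal.ofReal (G x y) ∂τ ∂σ
      ≤ ENNReal.ofReal (c / β) * (A * ENNReal.ofReal β * ν (thickening r (frontier Ω)) +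
          E * ENNReal.ofReal (β ^ (2 * α)) * σ (parallelSurface Ω β) * T) :=
        hT ▸ setLIntegral_mul_setLIntegral_le_of_notMem (measurableSet_parallelSurface hΩ β)
          hΩ.measurableSet isOpen_thickening.measurableSet (div_nonneg hc (le_of_lt hβ))
          (fun x hx => (hΦpos x hx.1).le) hwβ (hΦc.aemeasurable hΩ.measurableSet) hτ
          (ne_top_of_le_ne_top ENNReal.coe_ne_top hσβ) (hKm β) hKσβ hKβ hEβ
    _ ≤ ENNReal.ofReal (c / β) * (A * ENNReal.ofReal β * ν (thickening r (frontier Ω)) +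
          ENNReal.ofReal (β ^ (2 * α)) * (E * M * T)) := by
        rw [mul_comm (E : ℝ≥0∞), mul_assoc _ (E : ℝ≥0∞), mul_assoc _ (_ * _ : ℝ≥0∞)]
        gcongr
    _ = _ := by
        rw [ofReal_div_mul_add_eq hβ]
        simp only [ENNReal.coe_mul]
        rfl

end GreenPotential

theorem stmt5_general {X : Type*} [MetricSpace X] [ProperSpace X] [MeasurableSpace X]
    [OpensMeasurableSpace X] {σ τ : Measure X} {Ω : Set X} (hΩ : IsOpen Ω)
    (hΩb : Bornology.IsBounded Ω) {d : ℝ} (hd : 2 ≤ d) {C : ℝ≥0}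
    (hσ : ∀ᶠ β in 𝓝[>] (0 : ℝ), IsUpperAhlforsRegular (σ.restrict (parallelSurface Ω β)) (d - 1) C)
    {α : ℝ} (hα : 1 / 2 < α) {Φ Φ₀ : X → ℝ} {G : X → X → ℝ}
    (hΦc : ContinuousOn Φ Ω) (hΦpos : ∀ x ∈ Ω, 0 < Φ x)
    {c₁ β₁ : ℝ} (hβ₁ : 0 < β₁)
    (hΦ : ∀ x ∈ Ω, infDist x (frontier Ω) < β₁ → Φ x ≤ c₁ * infDist x (frontier Ω) ^ α)
    {cs : ℝ} (hcs : 0 < cs) (hΦ₀ : ∀ x ∈ Ω, cs⁻¹ * infDist x (frontier Ω) ≤ Φ₀ x)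
    {a c₀ : ℝ} (ha : 0 < a) (hc₀ : 0 < c₀)
    (hGnear : ∀ β ∈ Ioo 0 β₁, ∀ x ∈ parallelSurface Ω β, ∀ y ∈ Ω, 0 < dist x y → dist x y < a * β →
      Φ x * G x y ≤ c₀ * dist x y ^ (2 - d) * Φ y)
    (hGfar : ∀ β ∈ Ioo 0 β₁, ∀ x ∈ parallelSurface Ω β, ∀ y ∈ Ω, a * β ≤ dist x y →
      Φ x * G x y ≤ c₀ * β ^ (2 * α) * dist x y ^ (2 - d - 2 * α) * Φ y)
    (hGcmp : ∀ r > 0, ∃ Cr > 0, ∀ x ∈ Ω, ∀ y ∈ Ω, r ≤ infDist y (frontier Ω) →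
      infDist x (frontier Ω) < r / 2 → G x y ≤ Cr * Φ x)
    (hτ : ∫⁻ x in Ω, ENNReal.ofReal (Φ x) ∂τ ≠ ∞) :
    Tendsto (fun β => ∫⁻ x in parallelSurface Ω β,
      ENNReal.ofReal (Φ x / Φ₀ x) * ∫⁻ y in Ω, ENNReal.ofReal (G x y) ∂τ ∂σ) (𝓝[>] 0) (𝓝 0) := by
  obtain ⟨M, hM⟩ := IsUpperAhlforsRegular.exists_forall_measure_le (d - 1) C hΩb
  obtain ⟨D, hD⟩ := exists_lintegral_boundaryKernel_le (X := X) hd hα ha C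
  refine tendsto_setLIntegral_parallelSurface_mul hΩ hΦc hΦpos hτ hα hcs.le (M := M)
    (K := fun β x y => ENNReal.ofReal c₀ * boundaryKernel d α (a * β) β x y)
    (A := c₀.toNNReal * D) (fun β => (measurable_boundaryKernel d α (a * β) β).const_mul _)
    ?_ ?_ ?_ ?_ fun r hr => ?_
  · filter_upwards [hσ] with β hσβ
    have hsub : parallelSurface Ω β ⊆ Ω := sep_subset _ _
    simpa only [Measure.restrict_apply_superset hsub] using hM _ hσβ
  · filter_upwards [self_mem_nhdsWithin] with β hβ x hx
    have hβ₀ : 0 < β := hβ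
    have hΦ₀x : cs⁻¹ * β ≤ Φ₀ x := hx.2 ▸ hΦ₀ x hx.1
    calc Φ x / Φ₀ x ≤ Φ x / (cs⁻¹ * β) :=
          div_le_div_of_nonneg_left (hΦpos x hx.1).le (by positivity) hΦ₀x
      _ = cs / β * Φ x := by field_simp
  · filter_upwards [hσ, self_mem_nhdsWithin] with β hσβ hβ y
    rw [lintegral_const_mul' _ _ ENNReal.ofReal_ne_top, ENNReal.coe_mul, mul_assoc]
    exact mul_le_mul_right (hD _ hσβ β hβ y) _
  · filter_upwards [Ioo_mem_nhdsGT hβ₁] with β hβ x hx y hy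
    exact ofReal_le_boundaryKernel hc₀ (hΦpos y hy) hβ.1.le (hGnear β hβ x hx y hy)
      (hGfar β hβ x hx y hy)
  · obtain ⟨Cr, hCr, hGr⟩ := hGcmp r hr
    exact exists_eventually_ofReal_mul_le_of_notMem_thickening hΩ hΩb hΦc hΦpos hβ₁ hΦ hr hCr hGr

theorem stmt5 {N : ℕ} (hN : 3 ≤ N) (Ω : Set (EuclideanSpace ℝ (Fin N)))
    (hΩo : IsOpen Ω) (hΩb : Bornology.IsBounded Ω) (hΩ2 : HasC2Boundary Ω)
    (α : ℝ) (hα : 1/2 < α)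
    (Φ Φ₀ : EuclideanSpace ℝ (Fin N) → ℝ)
    (G : EuclideanSpace ℝ (Fin N) → EuclideanSpace ℝ (Fin N) → ℝ)
    (hΦc : ContinuousOn Φ Ω) (hΦpos : ∀ x ∈ Ω, 0 < Φ x)
    (c₁ β₁ : ℝ) (hc₁ : 1 ≤ c₁) (hβ₁ : 0 < β₁)
    -- `Φ ∼ δ^α` near the boundary
    (hΦ : ∀ x ∈ Ω, Metric.infDist x (frontier Ω) < β₁ →
      c₁⁻¹ * Metric.infDist x (frontier Ω) ^ α ≤ Φ x ∧
      Φ x ≤ c₁ * Metric.infDist x (frontier Ω) ^ α)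
    (cs : ℝ) (hcs : 1 ≤ cs)
    (hΦ₀ : ∀ x ∈ Ω, cs⁻¹ * Metric.infDist x (frontier Ω) ≤ Φ₀ x ∧
      Φ₀ x ≤ cs * Metric.infDist x (frontier Ω))
    (hΦ₀pos : ∀ x ∈ Ω, 0 < Φ₀ x)
    (hGm : Measurable (Function.uncurry G))
    (hGpos : ∀ x ∈ Ω, ∀ y ∈ Ω, x ≠ y → 0 < G x y)
    (hGsym : ∀ x ∈ Ω, ∀ y ∈ Ω, G x y = G y x)
    (a c₀ : ℝ) (ha : 2 ≤ a) (hc₀ : 1 ≤ c₀)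
    -- (i): upper boundary Green estimate near the diagonal
    (hG1 : ∀ β ∈ Set.Ioo (0:ℝ) β₁, ∀ x ∈ Ω, Metric.infDist x (frontier Ω) = β →
      ∀ y ∈ Ω, 0 < dist x y → dist x y < a * β →
        Φ x * G x y ≤ c₀ * dist x y ^ ((2:ℝ) - N) * Φ y)
    -- (ii): upper boundary Green estimate away from the diagonal
    (hG2 : ∀ β ∈ Set.Ioo (0:ℝ) β₁, ∀ x ∈ Ω, Metric.infDist x (frontier Ω) = β →
      ∀ y ∈ Ω, a * β ≤ dist x y →
        Φ x * G x y ≤ c₀ * β ^ (2 * α) * dist x y ^ ((2:ℝ) - N - 2 * α) * Φ y)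
    -- (iii): comparison of the Green kernel with the ground state near the boundary
    (hG3 : ∀ r : ℝ, 0 < r → ∃ Cr : ℝ, 0 < Cr ∧ ∀ x ∈ Ω, ∀ y ∈ Ω,
      r ≤ Metric.infDist y (frontier Ω) → Metric.infDist x (frontier Ω) < r / 2 →
      G x y ≤ Cr * Φ x)
    (τ : Measure (EuclideanSpace ℝ (Fin N))) (hτ : τ Ωᶜ = 0)
    (hτΦ : (∫⁻ x in Ω, ENNReal.ofReal (Φ x) ∂τ) < ⊤) :
    Tendsto (fun β : ℝ =>
        ∫⁻ x in {x ∈ Ω | Metric.infDist x (frontier Ω) = β},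
          ENNReal.ofReal (Φ x / Φ₀ x) *
            (∫⁻ y in Ω, ENNReal.ofReal (G x y) ∂τ) ∂(μH[(N:ℝ) - 1]))
      (𝓝[>] (0:ℝ)) (𝓝 0) := by
  obtain ⟨C, hC⟩ := hΩ2.hasStrictDiffBoundary.exists_isUpperAhlforsRegular hΩo hΩb
  rw [finrank_euclideanSpace_fin] at hC
  exact stmt5_general hΩo hΩb (by exact_mod_cast (by omega : 2 ≤ N)) hC hα hΦc hΦpos hβ₁
    (fun x hx hxβ => (hΦ x hx hxβ).2) (by positivity) (fun x hx => (hΦ₀ x hx).1) (by positivity)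
    (by positivity) (fun β hβ x hx => hG1 β hβ x hx.1 hx.2)
    (fun β hβ x hx => hG2 β hβ x hx.1 hx.2) hG3 hτΦ.ne
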